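/- Let Y be a metric space and let T be a weighted tree equipped with its path metric. Then qc_Y(T) = c_Y(T). In particular, if Z ⊆ Y and f : Z → T is a Lipschitz quotient map, then there exists a bi-Lipschitz embedding g : T → Y with dist(g) ≤ codist(f). -/

import Mathlib

open Set Function Filter

open scoped ENNReal

attribute [local instance] Classical.propDecidable

noncomputable section

def LipUB {α β : Type*} (dα : α → α → ℝ) (dβ : β → β → ℝ) (f : α → β) (L : ℝ) : Prop :=
  ∀ a b : α, dβ (f a) (f b) ≤ L * dα a b

def CoLipUB {α β : Type*} (dα : α → α → ℝ) (dβ : β → β → ℝ) (f : α → β) (C : ℝ) : Prop :=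
  ∀ a b : α, dα a b ≤ C * dβ (f a) (f b)

def IsBiLipEmb {α β : Type*} (dα : α → α → ℝ) (dβ : β → β → ℝ) (f : α → β) : Prop :=
  Function.Injective f ∧ ∃ L C : ℝ, LipUB dα dβ f L ∧ CoLipUB dα dβ f C

def distortionSet (α β : Type*) (dα : α → α → ℝ) (dβ : β → β → ℝ) : Set ℝ :=
  {D | ∃ f : α → β, Function.Injective f ∧ ∃ L C : ℝ,
    LipUB dα dβ f L ∧ CoLipUB dα dβ f C ∧ D = L * C}

def cDist (α β : Type*) (dα : α → α → ℝ) (dβ : β → β → ℝ) : ℝ≥0∞ :=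
  ⨅ D ∈ distortionSet α β dα dβ, ENNReal.ofReal D
def LipQuotientWith {α β : Type*} (dα : α → α → ℝ) (dβ : β → β → ℝ) (f : α → β)
    (L C : ℝ) : Prop :=
  Function.Surjective f ∧
  (∀ (x a : α) (r : ℝ), 0 < r → dα x a ≤ r → dβ (f x) (f a) ≤ L * r) ∧
  (∀ (x : α) (y : β) (r : ℝ), 0 < r → dβ (f x) y ≤ r / C → ∃ a : α, dα x a ≤ r ∧ f a = y)

def qcSet (X : Type*) [PseudoMetricSpace X] (β : Type*) (dβ : β → β → ℝ) : Set ℝ :=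
  {q | ∃ (Z : Set X) (f : Z → β) (L C : ℝ), 0 < L ∧ 0 < C ∧
    LipQuotientWith (fun a b : Z => dist a.1 b.1) dβ f L C ∧ q = L * C}

def qcDist (X : Type*) [PseudoMetricSpace X] (β : Type*) (dβ : β → β → ℝ) : ℝ≥0∞ :=
  ⨅ q ∈ qcSet X β dβ, ENNReal.ofReal q
structure RootedWTree (V : Type*) where
  root : V
  parent : V → V
  w : V → ℝ
  parent_root : parent root = root
  reach : ∀ v : V, ∃ n : ℕ, parent^[n] v = root
  w_pos : ∀ v : V, v ≠ root → 0 < w v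

namespace RootedWTree

variable {V : Type*} (T : RootedWTree V)

def up (v : V) (n : ℕ) : V := T.parent^[n] v

def Anc (u v : V) : Prop := ∃ n : ℕ, T.up v n = u

lemma exists_anc (x y : V) : ∃ n : ℕ, T.Anc (T.up x n) y := by
  obtain ⟨n, hn⟩ := T.reach x
  obtain ⟨m, hm⟩ := T.reach y
  exact ⟨n, m, by simp only [up]; rw [hm, hn]⟩

def climb (x y : V) : ℕ := Nat.find (T.exists_anc x y)

def rho (x y : V) : ℝ :=
  (∑ k ∈ Finset.range (T.climb x y), T.w (T.up x k)) +
  (∑ k ∈ Finset.range (T.climb y x), T.w (T.up y k))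

def pathEdges (x y : V) : List V :=
  ((List.range (T.climb x y)).map (fun k => T.up x k)) ++
  ((List.range (T.climb y x)).map (fun k => T.up y k))

def MonotoneClass {C : Type*} (χ : V → C) (c : C) : Prop :=
  (∀ u v : V, u ≠ T.root → v ≠ T.root → χ u = c → χ v = c → T.Anc u v ∨ T.Anc v u) ∧
  (∀ (v : V) (n : ℕ), v ≠ T.root → χ v = c → T.up v n ≠ T.root → χ (T.up v n) = c →
    ∀ k ≤ n, χ (T.up v k) = c)

def IsMonotoneColoring {C : Type*} (χ : V → C) : Prop := ∀ c : C, T.MonotoneClass χ c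

def IsBranch (P : Set V) : Prop := IsMaxChain (fun u v => T.Anc u v) P

def IsCaterpillar {C : Type*} (χ : V → C) (κ : ℕ) : Prop :=
  T.IsMonotoneColoring χ ∧
  ∀ P : Set V, T.IsBranch P → ∃ s : Finset C, s.card ≤ κ ∧ ∀ v ∈ P, v ≠ T.root → χ v ∈ s

def colorLen {C : Type*} (χ : V → C) (c : C) (x y : V) : ℝ :=
  (((T.pathEdges x y).filter (fun e => decide (χ e = c))).map T.w).sum

def IsStrong {C : Type*} (χ : V → C) (δ : ℝ) : Prop :=
  T.IsMonotoneColoring χ ∧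
  ∀ x y : V, x ≠ y →
    T.rho x y / 2 ≤
      (((T.pathEdges x y).filter
        (fun e => decide (δ * T.rho x y ≤ T.colorLen χ (χ e) x y))).map T.w).sum

end RootedWTree

/-!
A bi-Lipschitz embedding is inverted on its range, and the inverse is a Lipschitz quotient map with
the two constants exchanged; this uses no tree structure, so `qc ≤ c` for every metric space.

Conversely, a section of a Lipschitz quotient map `f` automatically satisfies the lower bound, since
`f` is Lipschitz. Over a rooted tree a section is chosen recursively from the root: once the parent
of `v` has been lifted, the co-Lipschitz condition provides a lift of `v` within `C * w v` of it.
Adding these bounds along the path that joins two vertices through their meet makes the section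
`C`-Lipschitz.
-/

section LipschitzBounds

open scoped Topology

variable {α β : Type*} {dα : α → α → ℝ} {dβ : β → β → ℝ}

lemma LipUB.mono {f : α → β} {L L' : ℝ} (hf : LipUB dα dβ f L) (hdα : ∀ a b, 0 ≤ dα a b)
    (hL : L ≤ L') : LipUB dα dβ f L' :=
  fun a b => (hf a b).trans (mul_le_mul_of_nonneg_right hL (hdα a b))

lemma CoLipUB.mono {f : α → β} {C C' : ℝ} (hf : CoLipUB dα dβ f C) (hdβ : ∀ a b, 0 ≤ dβ a b)
    (hC : C ≤ C') : CoLipUB dα dβ f C' :=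
  fun a b => (hf a b).trans (mul_le_mul_of_nonneg_right hC (hdβ (f a) (f b)))

lemma LipUB.coLipUB_of_rightInverse {f : α → β} {g : β → α} {L : ℝ} (hf : LipUB dα dβ f L)
    (hg : RightInverse g f) : CoLipUB dβ dα g L :=
  fun x y => by simpa only [hg x, hg y] using hf (g x) (g y)

lemma LipQuotientWith.lipUB {f : α → β} {L C : ℝ} (hf : LipQuotientWith dα dβ f L C)
    (hdα : ∀ a b, 0 ≤ dα a b) : LipUB dα dβ f L := by
  intro a b
  -- The radius `dα a b` itself may vanish, so it is approached from above.
  have hlim : Tendsto (fun r => L * r) (𝓝[>] dα a b) (𝓝 (L * dα a b)) :=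
    (continuous_const_mul L).continuousWithinAt
  exact ge_of_tendsto hlim <| eventually_mem_nhdsWithin.mono fun r hr =>
    hf.2.1 a b r ((hdα a b).trans_lt hr) (le_of_lt hr)

lemma lipQuotientWith_rangeSplitting {g : α → β} {L C : ℝ} (hg : Injective g)
    (hL : 0 < L) (hC : 0 ≤ C) (hLip : LipUB dα dβ g L) (hCoLip : CoLipUB dα dβ g C) :
    LipQuotientWith (fun a b : range g => dβ a b) dα (rangeSplitting g) C L := by
  refine ⟨(rightInverse_rangeSplitting hg).surjective, fun x a r _ hr => ?_,
    fun x y r _ hr => ⟨rangeFactorization g y, ?_, rightInverse_rangeSplitting hg y⟩⟩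
  · calc dα (rangeSplitting g x) (rangeSplitting g a)
        ≤ C * dβ x a := by
          simpa only [apply_rangeSplitting] using hCoLip (rangeSplitting g x) (rangeSplitting g a)
      _ ≤ C * r := mul_le_mul_of_nonneg_left hr hC
  · calc dβ x (g y)
        ≤ L * dα (rangeSplitting g x) y := by
          simpa only [apply_rangeSplitting] using hLip (rangeSplitting g x) y
      _ ≤ r := (le_div_iff₀' hL).mp hr

end LipschitzBounds

section Distortion

variable {X α : Type*} [PseudoMetricSpace X] {d : α → α → ℝ}

lemma qcDist_le_ofReal_mul {g : α → X} {L C : ℝ} (hg : Injective g) (hL : 0 < L) (hC : 0 < C)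
    (hLip : LipUB d (fun a b : X => dist a b) g L)
    (hCoLip : CoLipUB d (fun a b : X => dist a b) g C) :
    qcDist X α d ≤ ENNReal.ofReal (L * C) :=
  iInf₂_le _ ⟨range g, rangeSplitting g, C, L, hC, hL,
    lipQuotientWith_rangeSplitting hg hL hC.le hLip hCoLip, mul_comm L C⟩

lemma ofReal_max_zero_mul_max_zero_le (a b : ℝ) :
    ENNReal.ofReal (max a 0 * max b 0) ≤ ENNReal.ofReal (a * b) := by
  rcases le_total a 0 with ha | ha
  · simp [ha]
  rcases le_total b 0 with hb | hb
  · simp [hb]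
  · rw [max_eq_left ha, max_eq_left hb]

lemma qcDist_le_cDist (hd : ∀ a b, 0 ≤ d a b) :
    qcDist X α d ≤ cDist α X d (fun a b : X => dist a b) := by
  refine le_iInf₂ ?_
  rintro _ ⟨g, hg, L, C, hLip, hCoLip, rfl⟩
  -- On a one-point space the constants of an embedding need not be positive, hence `max _ ε`.
  have hbound : ∀ ε > 0, qcDist X α d ≤ ENNReal.ofReal (max L ε * max C ε) := fun ε hε =>
    qcDist_le_ofReal_mul hg (lt_max_of_lt_right hε) (lt_max_of_lt_right hε)
      (hLip.mono hd (le_max_left L ε)) (hCoLip.mono (fun _ _ => dist_nonneg) (le_max_left C ε))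
  have hcont : Continuous fun ε => ENNReal.ofReal (max L ε * max C ε) :=
    ENNReal.continuous_ofReal.comp (by fun_prop)
  calc qcDist X α d
      ≤ ENNReal.ofReal (max L 0 * max C 0) :=
        ge_of_tendsto (hcont.continuousWithinAt (s := Ioi 0))
          (eventually_mem_nhdsWithin.mono hbound)
    _ ≤ ENNReal.ofReal (L * C) := ofReal_max_zero_mul_max_zero_le L C

end Distortion

namespace RootedWTree

variable {V : Type*} (T : RootedWTree V)

lemma up_add (v : V) (m n : ℕ) : T.up v (m + n) = T.up (T.up v m) n := by
  simp only [up, Nat.add_comm m n, iterate_add_apply]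

lemma up_succ (v : V) (n : ℕ) : T.up v (n + 1) = T.parent (T.up v n) :=
  iterate_succ_apply' T.parent n v

lemma up_root (n : ℕ) : T.up T.root n = T.root :=
  IsFixedPt.iterate T.parent_root n

variable {T} in
lemma eq_root_of_isPeriodicPt {v : V} {n : ℕ} (hn : 0 < n) (hv : IsPeriodicPt T.parent n v) :
    v = T.root := by
  obtain ⟨N, hN⟩ := T.reach v
  have hup : T.up v N = T.root := hN
  calc v = T.up v (N * n) := (hv.const_mul N).symm
    _ = T.up (T.up v N) (N * n - N) := by
      rw [← up_add, Nat.add_sub_cancel' (Nat.le_mul_of_pos_right N hn)]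
    _ = T.root := by rw [hup, up_root]

lemma anc_up_up (v : V) {m n : ℕ} (h : m ≤ n) : T.Anc (T.up v n) (T.up v m) :=
  ⟨n - m, by rw [← up_add, Nat.add_sub_cancel' h]⟩

variable {T} in
lemma Anc.antisymm {u v : V} (huv : T.Anc u v) (hvu : T.Anc v u) : u = v := by
  obtain ⟨m, rfl⟩ := huv
  obtain ⟨n, hn⟩ := hvu
  rw [← up_add] at hn
  rcases Nat.eq_zero_or_pos (m + n) with hmn | hmn
  · rw [Nat.eq_zero_of_add_eq_zero_right hmn]
    rfl
  · rw [eq_root_of_isPeriodicPt hmn hn, up_root]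

lemma anc_up_climb (x y : V) : T.Anc (T.up x (T.climb x y)) y :=
  Nat.find_spec (T.exists_anc x y)

variable {T} in
lemma climb_le {x y : V} {n : ℕ} (h : T.Anc (T.up x n) y) : T.climb x y ≤ n :=
  Nat.find_min' (T.exists_anc x y) h

lemma up_climb_anc_up_climb (x y : V) :
    T.Anc (T.up x (T.climb x y)) (T.up y (T.climb y x)) := by
  obtain ⟨m, hm⟩ := T.anc_up_climb x y
  rw [← hm]
  exact T.anc_up_up y (climb_le ⟨T.climb x y, hm.symm⟩)

lemma up_climb_comm (x y : V) : T.up x (T.climb x y) = T.up y (T.climb y x) :=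
  (T.up_climb_anc_up_climb x y).antisymm (T.up_climb_anc_up_climb y x)

variable {T} in
lemma up_ne_root_of_lt_climb {x y : V} {k : ℕ} (h : k < T.climb x y) : T.up x k ≠ T.root :=
  fun hk => h.not_ge (climb_le (hk ▸ T.reach y))

lemma rho_nonneg (x y : V) : 0 ≤ T.rho x y := by
  have hleg : ∀ a b, 0 ≤ ∑ k ∈ Finset.range (T.climb a b), T.w (T.up a k) := fun a b =>
    Finset.sum_nonneg fun k hk =>
      (T.w_pos _ (up_ne_root_of_lt_climb (Finset.mem_range.mp hk))).le
  exact add_nonneg (hleg x y) (hleg y x)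

variable {T} in
lemma rho_parent {v : V} (hv : v ≠ T.root) : T.rho (T.parent v) v = T.w v := by
  have hdown : T.climb (T.parent v) v = 0 := Nat.le_zero.mp (climb_le ⟨1, rfl⟩)
  have hup : T.climb v (T.parent v) = 1 := by
    refine le_antisymm (climb_le ⟨0, rfl⟩) (Nat.one_le_iff_ne_zero.mpr fun h0 => hv ?_)
    obtain ⟨n, hn⟩ := T.anc_up_climb v (T.parent v)
    rw [h0] at hn
    exact eq_root_of_isPeriodicPt n.succ_pos hn
  simp [rho, hdown, hup, up]

lemma wellFounded_parent : WellFounded fun u v => v ≠ T.root ∧ T.parent v = u := by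
  refine ⟨fun v => ?_⟩
  obtain ⟨n, hn⟩ := T.reach v
  induction n generalizing v with
  | zero => exact ⟨v, fun _ h => absurd hn h.1⟩
  | succ n ih => exact ⟨v, fun _ h => h.2 ▸ ih (T.parent v) hn⟩

lemma exists_forall_parent_rel {F : V → Type*} {R : ∀ v, F (T.parent v) → F v → Prop}
    (hroot : Nonempty (F T.root))
    (hstep : ∀ v, v ≠ T.root → ∀ z : F (T.parent v), ∃ a, R v z a) :
    ∃ g : ∀ v, F v, ∀ v, v ≠ T.root → R v (g (T.parent v)) (g v) := by
  choose step hstep using hstep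
  let extend (v : V) (rec : ∀ u, v ≠ T.root ∧ T.parent v = u → F u) : F v :=
    if h : v = T.root then h ▸ hroot.some else step v h (rec (T.parent v) ⟨h, rfl⟩)
  refine ⟨T.wellFounded_parent.fix extend, fun v hv => ?_⟩
  rw [T.wellFounded_parent.fix_eq extend v]
  simp only [extend, dif_neg hv]
  exact hstep v hv _

section PseudoMetricSpace

variable {X : Type*} [PseudoMetricSpace X]

variable {T} in
lemma lipUB_of_forall_dist_parent_le {g : V → X} {K : ℝ}
    (hg : ∀ v, v ≠ T.root → dist (g (T.parent v)) (g v) ≤ K * T.w v) :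
    LipUB T.rho (fun a b : X => dist a b) g K := by
  have hleg : ∀ x y, dist (g x) (g (T.up x (T.climb x y))) ≤
      K * ∑ k ∈ Finset.range (T.climb x y), T.w (T.up x k) := by
    intro x y
    rw [Finset.mul_sum]
    refine dist_le_range_sum_of_dist_le (f := fun k => g (T.up x k)) _ fun {k} hk => ?_
    rw [up_succ, dist_comm]
    exact hg _ (up_ne_root_of_lt_climb hk)
  intro x y
  calc dist (g x) (g y)
      ≤ dist (g x) (g (T.up x (T.climb x y))) + dist (g y) (g (T.up x (T.climb x y))) :=
        dist_triangle_right _ _ _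
    _ ≤ K * T.rho x y := by
      rw [rho, mul_add]
      exact add_le_add (hleg x y) (T.up_climb_comm x y ▸ hleg y x)

variable {T} in
lemma exists_rightInverse_lipUB {f : X → V} {L C : ℝ} (hC : 0 < C)
    (hf : LipQuotientWith (fun a b : X => dist a b) T.rho f L C) :
    ∃ g : V → X, RightInverse g f ∧ LipUB T.rho (fun a b : X => dist a b) g C := by
  obtain ⟨hsurj, -, hcoLip⟩ := hf
  have hstep : ∀ v, v ≠ T.root → ∀ z : {z // f z = T.parent v},
      ∃ a : {a // f a = v}, dist z.1 a.1 ≤ C * T.w v := by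
    rintro v hv ⟨z, hz⟩
    have hball : T.rho (f z) v ≤ C * T.w v / C := by
      rw [hz, rho_parent hv, mul_div_cancel_left₀ _ hC.ne']
    obtain ⟨a, hdist, ha⟩ := hcoLip z v (C * T.w v) (mul_pos hC (T.w_pos v hv)) hball
    exact ⟨⟨a, ha⟩, hdist⟩
  obtain ⟨g, hg⟩ := T.exists_forall_parent_rel (F := fun v => {z // f z = v})
    (nonempty_subtype.mpr (hsurj T.root)) hstep
  exact ⟨fun v => (g v).1, fun v => (g v).2, lipUB_of_forall_dist_parent_le hg⟩

variable {T} in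
lemma exists_injective_lipUB_coLipUB {Z : Set X} {f : Z → V} {L C : ℝ} (hC : 0 < C)
    (hf : LipQuotientWith (fun a b : Z => dist a.1 b.1) T.rho f L C) :
    ∃ g : V → X, Injective g ∧ LipUB T.rho (fun a b : X => dist a b) g C ∧
      CoLipUB T.rho (fun a b : X => dist a b) g L := by
  obtain ⟨g, hgf, hg⟩ := exists_rightInverse_lipUB hC hf
  exact ⟨Subtype.val ∘ g, Subtype.val_injective.comp hgf.injective, hg,
    (hf.lipUB fun _ _ => dist_nonneg).coLipUB_of_rightInverse hgf⟩

lemma cDist_le_qcDist : cDist V X T.rho (fun a b : X => dist a b) ≤ qcDist X V T.rho := by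
  refine le_iInf₂ ?_
  rintro _ ⟨Z, f, L, C, -, hC, hf, rfl⟩
  obtain ⟨g, hg, hLip, hCoLip⟩ := exists_injective_lipUB_coLipUB hC hf
  exact iInf₂_le _ ⟨g, hg, C, L, hLip, hCoLip, mul_comm L C⟩

end PseudoMetricSpace

end RootedWTree

theorem tree_qc_eq_c_general
    {V : Type*} (Y : Type*) [PseudoMetricSpace Y] (T : RootedWTree V) :
    qcDist Y V T.rho = cDist V Y T.rho (fun a b : Y => dist a b) ∧
    (∀ (Z : Set Y) (f : Z → V) (L C : ℝ), 0 < C →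
      LipQuotientWith (fun a b : Z => dist a.1 b.1) T.rho f L C →
      ∃ g : V → Y, Function.Injective g ∧
        LipUB T.rho (fun a b : Y => dist a b) g C ∧
        CoLipUB T.rho (fun a b : Y => dist a b) g L) :=
  ⟨le_antisymm (qcDist_le_cDist T.rho_nonneg) T.cDist_le_qcDist,
    fun _ _ _ _ hC hf => RootedWTree.exists_injective_lipUB_coLipUB hC hf⟩

/-- Proposition 4.3: for a weighted tree `T` (with path metric `ρ`)
and a metric space `Y`, `qc_Y(T) = c_Y(T)`; moreover from any Lipschitz quotient
map `f : Z → T`, `Z ⊆ Y`, with constants `L, C` one gets a bi-Lipschitz embedding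
`g : T → Y` with `Lip(g) ≤ C` and `Lip(g⁻¹) ≤ L`, so `dist(g) ≤ codist(f)`. -/
theorem tree_qc_eq_c
    {V : Type*} (Y : Type*) [MetricSpace Y] (T : RootedWTree V) :
    qcDist Y V T.rho = cDist V Y T.rho (fun a b : Y => dist a b) ∧
    (∀ (Z : Set Y) (f : Z → V) (L C : ℝ), 0 < L → 0 < C →
      LipQuotientWith (fun a b : Z => dist a.1 b.1) T.rho f L C →
      ∃ g : V → Y, Function.Injective g ∧
        LipUB T.rho (fun a b : Y => dist a b) g C ∧
        CoLipUB T.rho (fun a b : Y => dist a b) g L) :=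
  let ⟨hqc, hembed⟩ := tree_qc_eq_c_general Y T
  ⟨hqc, fun Z f L C _ => hembed Z f L C⟩

end
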